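/- Let G be a finite group and K an ordered G-simplicial complex. Then TC_G(|K|) ≤ SC_G(K), i.e. the equivariant topological complexity of the geometric realization of K is at most the equivariant simplicial complexity of K. -/

import Mathlib

/-! ### Module A: equivariant TC / CC / LS for topological G-spaces -/

/-- The zigzag order `0 < 1 > 2 < 3 > ⋯` on natural numbers. -/
def zigzagLE (i j : ℕ) : Prop := i = j ∨ (i % 2 = 0 ∧ (j = i + 1 ∨ i = j + 1))

/-- The combinatorial interval `J m = {0, 1, …, m}`. -/
def J (m : ℕ) : Type := Fin (m + 1)

namespace J

/-- The underlying natural number of a point of `J m`. -/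
def val {m : ℕ} (i : J m) : ℕ := Fin.val i

/-- The initial point `0` of the combinatorial interval. -/
def zero (m : ℕ) : J m := (0 : Fin (m + 1))

/-- The final point `m` of the combinatorial interval. -/
def last (m : ℕ) : J m := Fin.last m

/-- The topology on `J m` whose open sets are the down-closed sets for the zigzag order. -/
instance (m : ℕ) : TopologicalSpace (J m) where
  IsOpen U := ∀ ⦃a⦄, a ∈ U → ∀ ⦃b⦄, zigzagLE (J.val b) (J.val a) → b ∈ U
  isOpen_univ := fun a _ b _ => Set.mem_univ b
  isOpen_inter := fun s t hs ht a ha b hba => ⟨hs ha.1 hba, ht ha.2 hba⟩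
  isOpen_sUnion := fun S hS a ha b hba => by
    obtain ⟨t, htS, hat⟩ := ha
    exact ⟨t, htS, hS t htS hat hba⟩

end J

section Equivariant

variable (G : Type*) [Group G]

/-- A set is `G`-invariant if it is stable under the action of every group element. -/
def GInvariant {α : Type*} [SMul G α] (U : Set α) : Prop :=
  ∀ g : G, ∀ x ∈ U, g • x ∈ U

variable (X : Type*) [TopologicalSpace X] [MulAction G X]

/-- `U ⊆ X × X` admits a continuous equivariant section of the free path fibration
`π : X^I → X × X`, `α ↦ (α 0, α 1)`. -/
def EqNavigable (U : Set (X × X)) : Prop :=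
  ∃ s : U → C(unitInterval, X), Continuous s ∧
    (∀ u : U, s u 0 = (u : X × X).1 ∧ s u 1 = (u : X × X).2) ∧
    (∀ (g : G) (u : U) (h : g • (u : X × X) ∈ U) (t : unitInterval),
      s ⟨g • (u : X × X), h⟩ t = g • s u t)

/-- The equivariant topological complexity: the least `k` such that `X × X` admits a cover by
`k` open invariant sets, each admitting a continuous equivariant section of the free path
fibration; `⊤` if there is no such cover. -/
noncomputable def eqTC : ℕ∞ :=
  sInf {k : ℕ∞ | ∃ n : ℕ, k = n ∧ ∃ U : Fin n → Set (X × X),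
    (∀ i, IsOpen (U i)) ∧ (∀ i, GInvariant G (U i)) ∧ (⋃ i, U i) = Set.univ ∧
    ∀ i, EqNavigable G X (U i)}

/-- `U ⊆ X × X` admits a continuous equivariant section of the combinatorial path fibration
`q_m : X^{J_m} → X × X`, `β ↦ (β 0, β m)`. -/
def EqNavigableJ (m : ℕ) (U : Set (X × X)) : Prop :=
  ∃ s : U → C(J m, X), Continuous s ∧
    (∀ u : U, s u (J.zero m) = (u : X × X).1 ∧ s u (J.last m) = (u : X × X).2) ∧
    (∀ (g : G) (u : U) (h : g • (u : X × X) ∈ U) (t : J m),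
      s ⟨g • (u : X × X), h⟩ t = g • s u t)

/-- The equivariant combinatorial complexity with paths of length `m`: the least `k` such that
`X × X` admits a cover by `k` open invariant sets, each admitting a continuous equivariant
section of the combinatorial path fibration `q_m`; `⊤` if there is no such cover. -/
noncomputable def eqCCm (m : ℕ) : ℕ∞ :=
  sInf {k : ℕ∞ | ∃ n : ℕ, k = n ∧ ∃ U : Fin n → Set (X × X),
    (∀ i, IsOpen (U i)) ∧ (∀ i, GInvariant G (U i)) ∧ (⋃ i, U i) = Set.univ ∧
    ∀ i, EqNavigableJ G X m (U i)}

/-- The equivariant combinatorial complexity: the minimum over all `m ≥ 1` of `eqCCm`. -/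
noncomputable def eqCC : ℕ∞ := ⨅ m : ℕ, eqCCm G X (m + 1)

/-- `U ⊆ X` is `G`-categorical for the orbit of `x₀`: the inclusion of `U` into `X` is
`G`-homotopic to a map taking values in the orbit of `x₀`. -/
def GCategoricalAt (U : Set X) (x₀ : X) : Prop :=
  ∃ F : U × unitInterval → X, Continuous F ∧
    (∀ u : U, F (u, 0) = (u : X)) ∧
    (∀ (g : G) (u : U) (h : g • (u : X) ∈ U) (t : unitInterval),
      F (⟨g • (u : X), h⟩, t) = g • F (u, t)) ∧
    (∀ u : U, F (u, 1) ∈ MulAction.orbit G x₀)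

/-- `U ⊆ X` is `G`-categorical: the inclusion of `U` into `X` is `G`-homotopic to a map taking
values in a single orbit. -/
def GCategorical (U : Set X) : Prop :=
  ∃ x₀ : X, GCategoricalAt G X U x₀

/-- The equivariant Lusternik–Schnirelmann category: the least `k` such that `X` is covered by
`k` open invariant `G`-categorical sets; `⊤` if there is no such cover. -/
noncomputable def eqLS : ℕ∞ :=
  sInf {k : ℕ∞ | ∃ n : ℕ, k = n ∧ ∃ U : Fin n → Set X,
    (∀ i, IsOpen (U i)) ∧ (∀ i, GInvariant G (U i)) ∧ (⋃ i, U i) = Set.univ ∧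
    ∀ i, GCategorical G X (U i)}

end Equivariant
/-! ### Module C: ordered G-simplicial complexes and their geometric realizations -/

/-- An ordered `G`-simplicial complex: a finite abstract simplicial complex whose vertex set
carries a partial order in which every simplex is totally ordered, together with an action of
`G` on the vertices by monotone simplicial maps. -/
structure GOSC (G : Type) [Group G] : Type 1 where
  /-- the vertex set -/
  V : Type
  [fin : Fintype V]
  [dec : DecidableEq V]
  [po : PartialOrder V]
  /-- the set of simplices -/
  faces : Set (Finset V)
  singleton_mem : ∀ v : V, {v} ∈ faces
  nonempty_of_mem : ∀ s ∈ faces, s.Nonempty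
  down_closed : ∀ s ∈ faces, ∀ t ⊆ s, t.Nonempty → t ∈ faces
  face_chain : ∀ s ∈ faces, ∀ x ∈ s, ∀ y ∈ s, x ≤ y ∨ y ≤ x
  /-- the action of `G` on vertices -/
  smul : G → V → V
  smul_one : ∀ v, smul 1 v = v
  smul_mul : ∀ g h v, smul (g * h) v = smul g (smul h v)
  smul_mono : ∀ g : G, ∀ x y : V, x ≤ y → smul g x ≤ smul g y
  smul_faces : ∀ g : G, ∀ s ∈ faces, s.image (smul g) ∈ faces

attribute [instance] GOSC.fin GOSC.dec GOSC.po

namespace GOSC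

variable {G : Type} [Group G]

/-- The underlying set of the geometric realization `|K|`: formal convex combinations of
vertices whose support is a simplex of `K`. -/
def realSet (K : GOSC G) : Set (K.V → ℝ) :=
  {f | (∀ v, 0 ≤ f v) ∧ (∑ v, f v) = 1 ∧ ∃ s ∈ K.faces, ∀ v, f v ≠ 0 → v ∈ s}

/-- The geometric realization `|K|` of an ordered `G`-simplicial complex, topologized as a
subspace of Euclidean space `K.V → ℝ`. -/
def Real (K : GOSC G) : Type := {f : K.V → ℝ // f ∈ K.realSet}

instance (K : GOSC G) : TopologicalSpace K.Real :=
  inferInstanceAs (TopologicalSpace {f : K.V → ℝ // f ∈ K.realSet})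

/-- Each `g : G` acts on `K.V` by an order isomorphism. -/
def permOf (K : GOSC G) (g : G) : Equiv K.V K.V where
  toFun := K.smul g
  invFun := K.smul g⁻¹
  left_inv := fun v => by
    rw [← K.smul_mul, inv_mul_cancel, K.smul_one]
  right_inv := fun v => by
    rw [← K.smul_mul, mul_inv_cancel, K.smul_one]

/-- The action of `G` on the geometric realization, by affine extension:
`(g • f) v = f (g⁻¹ • v)`. -/
instance (K : GOSC G) : SMul G K.Real where
  smul g f := ⟨fun v => f.val (K.smul g⁻¹ v), by
    obtain ⟨hnn, hsum, s, hs, hsupp⟩ := f.prop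
    refine ⟨fun v => hnn _, ?_, s.image (K.smul g), K.smul_faces g s hs, ?_⟩
    · rw [show (∑ v, f.val (K.smul g⁻¹ v)) = ∑ v, f.val (K.permOf g⁻¹ v) from rfl,
        Equiv.sum_comp (K.permOf g⁻¹) f.val]
      exact hsum
    · intro v hv
      have : K.smul g⁻¹ v ∈ s := hsupp _ hv
      refine Finset.mem_image.mpr ⟨K.smul g⁻¹ v, this, ?_⟩
      rw [← K.smul_mul, mul_inv_cancel, K.smul_one]⟩

lemma smul_apply (K : GOSC G) (g : G) (f : K.Real) (v : K.V) :
    (g • f).val v = f.val (K.smul g⁻¹ v) := rfl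

instance (K : GOSC G) : MulAction G K.Real where
  one_smul f := by
    apply Subtype.ext
    funext v
    rw [smul_apply, inv_one, K.smul_one]
  mul_smul g h f := by
    apply Subtype.ext
    funext v
    rw [smul_apply, smul_apply, smul_apply, mul_inv_rev, K.smul_mul]

end GOSC
namespace GOSC

variable {G : Type} [Group G]

/-- The product of two ordered `G`-simplicial complexes: vertices are pairs with the product
order, simplices are the nonempty chains both of whose projections are simplices, and `G`
acts diagonally. -/
noncomputable def prod (K L : GOSC G) : GOSC G :=
  letI : DecidableEq (K.V × L.V) := Classical.decEq _
  { V := K.V × L.V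
    faces := {s | s.Nonempty ∧ (∀ x ∈ s, ∀ y ∈ s, x ≤ y ∨ y ≤ x) ∧
      s.image Prod.fst ∈ K.faces ∧ s.image Prod.snd ∈ L.faces}
    singleton_mem := fun v => ⟨Finset.singleton_nonempty v, by
        intro x hx y hy
        rw [Finset.mem_singleton] at hx hy
        subst hx; subst hy; exact Or.inl le_rfl,
      by rw [Finset.image_singleton]; exact K.singleton_mem v.1,
      by rw [Finset.image_singleton]; exact L.singleton_mem v.2⟩
    nonempty_of_mem := fun s hs => hs.1
    down_closed := fun s hs t hts htne =>
      ⟨htne, fun x hx y hy => hs.2.1 x (hts hx) y (hts hy),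
        K.down_closed _ hs.2.2.1 _ (Finset.image_subset_image hts) (htne.image _),
        L.down_closed _ hs.2.2.2 _ (Finset.image_subset_image hts) (htne.image _)⟩
    face_chain := fun s hs => hs.2.1
    smul := fun g p => (K.smul g p.1, L.smul g p.2)
    smul_one := fun p => by show (K.smul 1 p.1, L.smul 1 p.2) = p; rw [K.smul_one, L.smul_one]
    smul_mul := fun g h p => by
      show (K.smul (g * h) p.1, L.smul (g * h) p.2) = _
      rw [K.smul_mul, L.smul_mul]
    smul_mono := fun g x y hxy => ⟨K.smul_mono g _ _ hxy.1, L.smul_mono g _ _ hxy.2⟩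
    smul_faces := fun g s hs => by
      refine ⟨hs.1.image _, ?_, ?_, ?_⟩
      · intro x hx y hy
        rcases Finset.mem_image.mp hx with ⟨a, ha, rfl⟩
        rcases Finset.mem_image.mp hy with ⟨b, hb, rfl⟩
        rcases hs.2.1 a ha b hb with h | h
        · exact Or.inl ⟨K.smul_mono g _ _ h.1, L.smul_mono g _ _ h.2⟩
        · exact Or.inr ⟨K.smul_mono g _ _ h.1, L.smul_mono g _ _ h.2⟩
      · rw [Finset.image_image,
          show (Prod.fst ∘ fun p : K.V × L.V => (K.smul g p.1, L.smul g p.2)) =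
            K.smul g ∘ Prod.fst from rfl, ← Finset.image_image]
        exact K.smul_faces g _ hs.2.2.1
      · rw [Finset.image_image,
          show (Prod.snd ∘ fun p : K.V × L.V => (K.smul g p.1, L.smul g p.2)) =
            L.smul g ∘ Prod.snd from rfl, ← Finset.image_image]
        exact L.smul_faces g _ hs.2.2.2 }

/-- The barycentric subdivision of an ordered `G`-simplicial complex: vertices are the
simplices of `K` ordered by inclusion, simplices are the nonempty chains of simplices,
with the induced `G`-action. -/
noncomputable def sd (K : GOSC G) : GOSC G :=
  letI : DecidablePred (· ∈ K.faces) := Classical.decPred _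
  letI : DecidableEq {s : Finset K.V // s ∈ K.faces} := Classical.decEq _
  letI : Fintype {s : Finset K.V // s ∈ K.faces} := Subtype.fintype _
  { V := {s : Finset K.V // s ∈ K.faces}
    faces := {σ | σ.Nonempty ∧ ∀ a ∈ σ, ∀ b ∈ σ, a ≤ b ∨ b ≤ a}
    singleton_mem := fun v => ⟨Finset.singleton_nonempty v, by
      intro a ha b hb
      rw [Finset.mem_singleton] at ha hb
      subst ha; subst hb; exact Or.inl le_rfl⟩
    nonempty_of_mem := fun σ hσ => hσ.1
    down_closed := fun σ hσ τ hτσ hτne => ⟨hτne, fun a ha b hb => hσ.2 a (hτσ ha) b (hτσ hb)⟩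
    face_chain := fun σ hσ => hσ.2
    smul := fun g s => ⟨s.val.image (K.smul g), K.smul_faces g s.val s.prop⟩
    smul_one := fun s => by
      apply Subtype.ext
      show s.val.image (K.smul 1) = s.val
      rw [Finset.image_congr (g := id) (fun x _ => K.smul_one x), Finset.image_id]
    smul_mul := fun g h s => by
      apply Subtype.ext
      show s.val.image (K.smul (g * h)) = (s.val.image (K.smul h)).image (K.smul g)
      rw [Finset.image_image]
      exact Finset.image_congr (fun x _ => K.smul_mul g h x)
    smul_mono := fun g s t hst => by
      show s.val.image (K.smul g) ≤ t.val.image (K.smul g)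
      exact Finset.image_subset_image hst
    smul_faces := fun g σ hσ => by
      refine ⟨hσ.1.image _, ?_⟩
      intro a ha b hb
      rcases Finset.mem_image.mp ha with ⟨a', ha', rfl⟩
      rcases Finset.mem_image.mp hb with ⟨b', hb', rfl⟩
      rcases hσ.2 a' ha' b' hb' with h | h
      · exact Or.inl (Finset.image_subset_image h)
      · exact Or.inr (Finset.image_subset_image h) }

/-- Iterated barycentric subdivision of an ordered `G`-simplicial complex. -/
noncomputable def sdIter : ℕ → GOSC G → GOSC G
  | 0, K => K
  | (n + 1), K => (sdIter n K).sd

/-- Every simplex of an ordered simplicial complex has a greatest vertex. -/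
lemma exists_greatest (K : GOSC G) (s : Finset K.V) (hs : s ∈ K.faces) :
    ∃ m ∈ s, ∀ x ∈ s, x ≤ m := by
  obtain ⟨m, hm, hmax⟩ := Finset.exists_maximal (K.nonempty_of_mem s hs)
  refine ⟨m, hm, fun x hx => ?_⟩
  rcases K.face_chain s hs x hx m hm with h | h
  · exact h
  · rcases eq_or_lt_of_le h with e | lt
    · exact le_of_eq e.symm
    · exact hmax hx h

/-- The last-vertex map `τ : sd(K) → K`, the chosen equivariant simplicial approximation of
the identity: it sends a simplex of `K` (a vertex of `sd(K)`) to its greatest vertex. -/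
noncomputable def tau (K : GOSC G) : (sd K).V → K.V := fun s =>
  Classical.choose (K.exists_greatest s.val s.prop)

/-- The iterated last-vertex map `sd^n(M) → M`, the chosen equivariant simplicial
approximation of the identity. -/
noncomputable def tauIter : (n : ℕ) → (M : GOSC G) → (sdIter n M).V → M.V
  | 0, _ => id
  | (n + 1), M => (tauIter n M) ∘ (tau (sdIter n M))

/-- The two vertex maps `π₁, π₂ : M → K` are equivariantly `c`-contiguous on the invariant
subcomplex determined by the down-closed set of simplices `Λ`: there is a chain of `c + 1`
equivariant simplicial maps from `π₁` to `π₂` in which consecutive maps are contiguous. -/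
def ContigOn (M K : GOSC G) (π₁ π₂ : M.V → K.V) (Λ : Set (Finset M.V)) (c : ℕ) : Prop :=
  ∃ φ : Fin (c + 1) → M.V → K.V,
    (∀ s ∈ Λ, ∀ v ∈ s, φ 0 v = π₁ v) ∧
    (∀ s ∈ Λ, ∀ v ∈ s, φ (Fin.last c) v = π₂ v) ∧
    (∀ j, ∀ s ∈ Λ, s.image (φ j) ∈ K.faces) ∧
    (∀ j, ∀ g : G, ∀ s ∈ Λ, ∀ v ∈ s, φ j (M.smul g v) = K.smul g (φ j v)) ∧
    (∀ j : Fin c, ∀ s ∈ Λ, (s.image (φ j.castSucc) ∪ s.image (φ j.succ)) ∈ K.faces)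

/-- `SC_G^{b,c}(K)`: the least `n` such that `sd^b(K × K)` can be covered by `n` invariant
subcomplexes, on each of which the two composites of the iterated (last-vertex) equivariant
approximations of the identity `sd^b(K×K) → K×K` with the two projections `K×K → K` are
equivariantly `c`-contiguous; `⊤` if there is no such cover. -/
noncomputable def SCbc (K : GOSC G) (b c : ℕ) : ℕ∞ :=
  sInf {k : ℕ∞ | ∃ n : ℕ, k = n ∧
    ∃ Λ : Fin n → Set (Finset (sdIter b (K.prod K)).V),
      (∀ i, Λ i ⊆ (sdIter b (K.prod K)).faces) ∧
      (∀ i, ∀ s ∈ Λ i, ∀ t ⊆ s, t.Nonempty → t ∈ Λ i) ∧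
      (∀ i, ∀ g : G, ∀ s ∈ Λ i, s.image ((sdIter b (K.prod K)).smul g) ∈ Λ i) ∧
      ((sdIter b (K.prod K)).faces ⊆ ⋃ i, Λ i) ∧
      ∀ i, ContigOn (sdIter b (K.prod K)) K
        (fun v => (tauIter b (K.prod K) v).1)
        (fun v => (tauIter b (K.prod K) v).2)
        (Λ i) c}

/-- The equivariant simplicial complexity `SC_G(K) = min_{b,c} SC_G^{b,c}(K)`. -/
noncomputable def SCG (K : GOSC G) : ℕ∞ :=
  ⨅ b : ℕ, ⨅ c : ℕ, SCbc K b c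

end GOSC

namespace GOSC

section Proof

open Classical in
/-- Unnormalised points of the realization. -/
def Good {G : Type} [Group G] (M : GOSC G) (f : M.V → ℝ) : Prop :=
  (∀ v, 0 ≤ f v) ∧ (∃ v, f v ≠ 0) ∧ ∃ s ∈ M.faces, ∀ v, f v ≠ 0 → v ∈ s

/-- Action on functions. -/
def act {G : Type} [Group G] (M : GOSC G) (g : G) (f : M.V → ℝ) : M.V → ℝ :=
  fun v => f (M.smul g⁻¹ v)

lemma smul_inv_smul' {G : Type} [Group G] (M : GOSC G) (g : G) (v : M.V) :
    M.smul g⁻¹ (M.smul g v) = v := (M.permOf g).left_inv v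

lemma smul_smul_inv' {G : Type} [Group G] (M : GOSC G) (g : G) (v : M.V) :
    M.smul g (M.smul g⁻¹ v) = v := (M.permOf g).right_inv v

lemma smul_le_iff {G : Type} [Group G] (M : GOSC G) (g : G) (v w : M.V) :
    M.smul g v ≤ M.smul g w ↔ v ≤ w := by
  refine ⟨fun h => ?_, M.smul_mono g v w⟩
  have := M.smul_mono g⁻¹ _ _ h
  rwa [smul_inv_smul', smul_inv_smul'] at this

lemma smul_le_comm {G : Type} [Group G] (M : GOSC G) (g : G) (v w : M.V) :
    M.smul g v ≤ w ↔ v ≤ M.smul g⁻¹ w := by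
  rw [← smul_le_iff M g v, smul_smul_inv']

lemma smul_lt_comm {G : Type} [Group G] (M : GOSC G) (g : G) (v w : M.V) :
    M.smul g v < w ↔ v < M.smul g⁻¹ w := by
  rw [lt_iff_le_not_ge, lt_iff_le_not_ge, smul_le_comm, ← smul_le_iff M g (M.smul g⁻¹ w) v,
    smul_smul_inv']

lemma sum_act {G : Type} [Group G] (M : GOSC G) (g : G) (F : M.V → ℝ) :
    ∑ v, F (M.smul g v) = ∑ v, F v := Equiv.sum_comp (M.permOf g) F

open Classical in
/-- cumulative sums -/
noncomputable def cumLE {G : Type} [Group G] (M : GOSC G) (x : M.V → ℝ) (a : M.V) : ℝ :=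
  ∑ v, if v ≤ a then x v else 0

open Classical in
/-- strict cumulative sums -/
noncomputable def cumLT {G : Type} [Group G] (M : GOSC G) (x : M.V → ℝ) (a : M.V) : ℝ :=
  ∑ v, if v < a then x v else 0

lemma cumLE_act {G : Type} [Group G] (M : GOSC G) (g : G) (x : M.V → ℝ) (a : M.V) :
    cumLE M (act M g x) a = cumLE M x (M.smul g⁻¹ a) := by
  unfold cumLE
  rw [← sum_act M g]
  refine Finset.sum_congr rfl fun v _ => ?_
  simp only [act, smul_inv_smul']
  classical exact if_congr (smul_le_comm M g v a) rfl rfl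

lemma cumLT_act {G : Type} [Group G] (M : GOSC G) (g : G) (x : M.V → ℝ) (a : M.V) :
    cumLT M (act M g x) a = cumLT M x (M.smul g⁻¹ a) := by
  unfold cumLT
  rw [← sum_act M g]
  refine Finset.sum_congr rfl fun v _ => ?_
  simp only [act, smul_inv_smul']
  classical exact if_congr (smul_lt_comm M g v a) rfl rfl

lemma cumLE_le_cumLT {G : Type} [Group G] (M : GOSC G) (x : M.V → ℝ) (hx : ∀ v, 0 ≤ x v)
    {a b : M.V} (h : a < b) : cumLE M x a ≤ cumLT M x b := by
  refine Finset.sum_le_sum fun v _ => ?_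
  by_cases h1 : v ≤ a
  · rw [if_pos h1, if_pos (lt_of_le_of_lt h1 h)]
  · rw [if_neg h1]; split_ifs <;> simp [hx]

lemma continuous_cumLE {G : Type} [Group G] (M : GOSC G) (a : M.V) :
    Continuous fun x : M.V → ℝ => cumLE M x a := by
  unfold cumLE
  refine continuous_finsetSum _ fun v _ => ?_
  split_ifs <;> fun_prop

lemma continuous_cumLT {G : Type} [Group G] (M : GOSC G) (a : M.V) :
    Continuous fun x : M.V → ℝ => cumLT M x a := by
  unfold cumLT
  refine continuous_finsetSum _ fun v _ => ?_
  split_ifs <;> fun_prop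

lemma le_cumLE {G : Type} [Group G] (M : GOSC G) (x : M.V → ℝ) (hx : ∀ v, 0 ≤ x v)
    (a : M.V) : x a ≤ cumLE M x a := by
  classical
  unfold cumLE
  have := Finset.single_le_sum (f := fun v => if v ≤ a then x v else 0)
    (fun v _ => by split_ifs <;> simp [hx]) (Finset.mem_univ a)
  rw [if_pos le_rfl] at this
  convert this

/-- The staircase weights on the product. -/
noncomputable def stair {G : Type} [Group G] (K : GOSC G) (x y : K.V → ℝ) :
    (K.prod K).V → ℝ :=
  fun p => x p.1 * y p.2 * max 0 (cumLE K y p.2 - cumLT K x p.1) *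
    max 0 (cumLE K x p.1 - cumLT K y p.2)

lemma stair_act {G : Type} [Group G] (K : GOSC G) (g : G) (x y : K.V → ℝ) :
    stair K (act K g x) (act K g y) = act (K.prod K) g (stair K x y) := by
  funext p
  simp only [stair, cumLE_act, cumLT_act]
  rfl

lemma continuous_stair {G : Type} [Group G] (K : GOSC G) :
    Continuous fun p : (K.V → ℝ) × (K.V → ℝ) => stair K p.1 p.2 := by
  refine continuous_pi fun p => ?_
  have h1 := (continuous_cumLE K p.1).comp (continuous_fst (X := K.V → ℝ) (Y := K.V → ℝ))
  have h2 := (continuous_cumLT K p.1).comp (continuous_fst (X := K.V → ℝ) (Y := K.V → ℝ))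
  have h3 := (continuous_cumLE K p.2).comp (continuous_snd (X := K.V → ℝ) (Y := K.V → ℝ))
  have h4 := (continuous_cumLT K p.2).comp (continuous_snd (X := K.V → ℝ) (Y := K.V → ℝ))
  have h5 : Continuous fun q : (K.V → ℝ) × (K.V → ℝ) => q.1 p.1 :=
    (continuous_apply _).comp continuous_fst
  have h6 : Continuous fun q : (K.V → ℝ) × (K.V → ℝ) => q.2 p.2 :=
    (continuous_apply _).comp continuous_snd
  exact ((h5.mul h6).mul (continuous_const.max (h3.sub h2))).mul
    (continuous_const.max (h1.sub h4))

lemma stair_ne {G : Type} [Group G] (K : GOSC G) {x y : K.V → ℝ} {p : (K.prod K).V}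
    (h : stair K x y p ≠ 0) : x p.1 ≠ 0 ∧ y p.2 ≠ 0 ∧ cumLT K x p.1 < cumLE K y p.2 ∧
      cumLT K y p.2 < cumLE K x p.1 := by
  unfold stair at h
  simp only [mul_ne_zero_iff] at h
  obtain ⟨⟨⟨h1, h2⟩, h3⟩, h4⟩ := h
  refine ⟨h1, h2, ?_, ?_⟩
  · by_contra hc
    exact h3 (max_eq_left (by linarith))
  · by_contra hc
    exact h4 (max_eq_left (by linarith))

lemma Good.exists_min {G : Type} [Group G] (K : GOSC G) {x : K.V → ℝ} (hx : Good K x) :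
    ∃ a, 0 < x a ∧ cumLT K x a = 0 := by
  classical
  obtain ⟨h0, ⟨v, hv⟩, s, hs, hsupp⟩ := hx
  obtain ⟨a, ha⟩ := Finset.exists_minimal (s := Finset.univ.filter fun v => x v ≠ 0)
    ⟨v, by simpa using hv⟩
  refine ⟨a, ?_, ?_⟩
  · have := ha.1
    simp only [Finset.mem_filter, Finset.mem_univ, true_and] at this
    exact lt_of_le_of_ne (h0 a) (Ne.symm this)
  · unfold cumLT
    refine Finset.sum_eq_zero fun w _ => ?_
    split_ifs with hw
    · by_contra hne
      exact absurd (ha.2 (by simpa using hne) hw.le) (not_le_of_gt hw)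
    · rfl

lemma Good.stair {G : Type} [Group G] (K : GOSC G) {x y : K.V → ℝ} (hx : Good K x)
    (hy : Good K y) : Good (K.prod K) (stair K x y) := by
  classical
  have hne : ∃ p, GOSC.stair K x y p ≠ 0 := by
    obtain ⟨a, ha, ha'⟩ := hx.exists_min
    obtain ⟨b, hb, hb'⟩ := hy.exists_min
    refine ⟨((a, b) : K.V × K.V), ?_⟩
    have h1 := le_cumLE K x hx.1 a
    have h2 := le_cumLE K y hy.1 b
    have : 0 < GOSC.stair K x y ((a, b) : K.V × K.V) := by
      show 0 < x a * y b * max 0 (cumLE K y b - cumLT K x a) *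
        max 0 (cumLE K x a - cumLT K y b)
      have h3 : 0 < max 0 (cumLE K y b - cumLT K x a) := lt_max_of_lt_right (by linarith)
      have h4 : 0 < max 0 (cumLE K x a - cumLT K y b) := lt_max_of_lt_right (by linarith)
      positivity
    exact this.ne'
  refine ⟨fun p => ?_, hne, ?_⟩
  · exact mul_nonneg (mul_nonneg (mul_nonneg (hx.1 _) (hy.1 _)) (le_max_left _ _))
      (le_max_left _ _)
  · obtain ⟨hx0, -, s, hs, hsx⟩ := hx
    obtain ⟨hy0, -, t, ht, hty⟩ := hy
    obtain ⟨p0, hp0⟩ := hne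
    obtain ⟨S, hS⟩ : ∃ S : Finset (K.prod K).V, ∀ p, p ∈ S ↔ GOSC.stair K x y p ≠ 0 :=
      ⟨Finset.univ.filter fun p => GOSC.stair K x y p ≠ 0, fun p => by simp⟩
    refine ⟨S, ⟨⟨p0, (hS p0).2 hp0⟩, ?_, ?_, ?_⟩, fun v hv => (hS v).2 hv⟩
    · intro p hp q hq
      replace hp := (hS p).1 hp
      replace hq := (hS q).1 hq
      obtain ⟨p1, p2, p3, p4⟩ := stair_ne K hp
      obtain ⟨q1, q2, q3, q4⟩ := stair_ne K hq
      have key : ∀ a a' b b' : K.V, cumLT K x a' < cumLE K y b' →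
          cumLT K y b < cumLE K x a → a < a' → b' < b → False := by
        intro a a' b b' e1 e2 l1 l2
        have := cumLE_le_cumLT K x hx0 l1
        have := cumLE_le_cumLT K y hy0 l2
        linarith
      have c1 := K.face_chain s hs _ (hsx _ p1) _ (hsx _ q1)
      have c2 := K.face_chain t ht _ (hty _ p2) _ (hty _ q2)
      by_contra hcon
      rw [not_or] at hcon
      obtain ⟨n1, n2⟩ := hcon
      have m1 : ¬ (p.1 ≤ q.1 ∧ p.2 ≤ q.2) := n1
      have m2 : ¬ (q.1 ≤ p.1 ∧ q.2 ≤ p.2) := n2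
      by_cases e1 : p.1 ≤ q.1
      · have e2 : ¬ p.2 ≤ q.2 := fun h => m1 ⟨e1, h⟩
        have e3 : q.2 ≤ p.2 := c2.resolve_left e2
        have e4 : ¬ q.1 ≤ p.1 := fun h => m2 ⟨h, e3⟩
        exact key p.1 q.1 p.2 q.2 q3 p4 (lt_of_le_not_ge e1 e4) (lt_of_le_not_ge e3 e2)
      · have e3 : q.1 ≤ p.1 := c1.resolve_left e1
        have e2 : ¬ q.2 ≤ p.2 := fun h => m2 ⟨e3, h⟩
        have e4 : p.2 ≤ q.2 := c2.resolve_right e2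
        exact key q.1 p.1 q.2 p.2 p3 q4 (lt_of_le_not_ge e3 e1) (lt_of_le_not_ge e4 e2)
    · refine K.down_closed s hs _ ?_ (Finset.Nonempty.image ⟨p0, (hS p0).2 hp0⟩ _)
      intro v hv
      obtain ⟨p, hp, rfl⟩ := Finset.mem_image.mp hv
      replace hp := (hS p).1 hp
      exact hsx _ (stair_ne K hp).1
    · refine K.down_closed t ht _ ?_ (Finset.Nonempty.image ⟨p0, (hS p0).2 hp0⟩ _)
      intro v hv
      obtain ⟨p, hp, rfl⟩ := Finset.mem_image.mp hv
      replace hp := (hS p).1 hp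
      exact hty _ (stair_ne K hp).2.1

/-- Unnormalised weights on the barycentric subdivision. -/
noncomputable def subd {G : Type} [Group G] (M : GOSC G) (f : M.V → ℝ) : M.sd.V → ℝ :=
  fun s => (∏ v ∈ s.1, f v) * ∏ v ∈ s.1, ∏ u, if u ∈ s.1 then 1 else max 0 (f v - f u)

lemma continuous_subd {G : Type} [Group G] (M : GOSC G) : Continuous (subd M) := by
  refine continuous_pi fun s => ?_
  unfold subd
  refine Continuous.mul (by fun_prop) ?_
  refine continuous_finsetProd _ fun v _ => continuous_finsetProd _ fun u _ => ?_
  split_ifs <;> fun_prop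

lemma subd_act {G : Type} [Group G] (M : GOSC G) (g : G) (f : M.V → ℝ) :
    subd M (act M g f) = act M.sd g (subd M f) := by
  funext s
  have hinj : Function.Injective (M.smul g⁻¹) := (M.permOf g⁻¹).injective
  show _ = (∏ v ∈ s.1.image (M.smul g⁻¹), f v) * ∏ v ∈ s.1.image (M.smul g⁻¹),
    ∏ u, if u ∈ s.1.image (M.smul g⁻¹) then 1 else max 0 (f v - f u)
  rw [Finset.prod_image (fun a _ b _ h => hinj h), Finset.prod_image (fun a _ b _ h => hinj h)]
  unfold subd act
  congr 1
  refine Finset.prod_congr rfl fun v _ => ?_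
  rw [← Equiv.prod_comp (M.permOf g⁻¹) (fun u => if u ∈ s.1.image (M.smul g⁻¹) then (1 : ℝ) else
    max 0 (f (M.smul g⁻¹ v) - f u))]
  refine Finset.prod_congr rfl fun u _ => ?_
  show _ = if M.smul g⁻¹ u ∈ s.1.image (M.smul g⁻¹) then 1 else
    max 0 (f (M.smul g⁻¹ v) - f (M.smul g⁻¹ u))
  simp only [Finset.mem_image, hinj.eq_iff, exists_eq_right]

lemma subd_ne {G : Type} [Group G] (M : GOSC G) {f : M.V → ℝ} {s : M.sd.V}
    (h : subd M f s ≠ 0) : (∀ v ∈ s.1, f v ≠ 0) ∧ ∀ v ∈ s.1, ∀ u ∉ s.1, f u < f v := by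
  unfold subd at h
  rw [mul_ne_zero_iff, Finset.prod_ne_zero_iff, Finset.prod_ne_zero_iff] at h
  refine ⟨h.1, fun v hv u hu => ?_⟩
  have := h.2 v hv
  rw [Finset.prod_ne_zero_iff] at this
  have := this u (Finset.mem_univ u)
  rw [if_neg hu] at this
  by_contra hc
  exact this (max_eq_left (by linarith))

lemma Good.subd {G : Type} [Group G] (M : GOSC G) {f : M.V → ℝ} (hf : Good M f) :
    Good M.sd (subd M f) := by
  classical
  obtain ⟨h0, ⟨v, hv⟩, s, hs, hsupp⟩ := hf
  have hne : ∃ p, GOSC.subd M f p ≠ 0 := by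
    obtain ⟨m, -, hm⟩ := Finset.exists_max_image Finset.univ f ⟨v, Finset.mem_univ v⟩
    have hmpos : 0 < f m := lt_of_lt_of_le (lt_of_le_of_ne (h0 v) (Ne.symm hv))
      (hm v (Finset.mem_univ v))
    have hface : (Finset.univ.filter fun w => f w = f m) ∈ M.faces := by
      refine M.down_closed s hs _ (fun w hw => hsupp w ?_) ⟨m, by simp⟩
      simp only [Finset.mem_filter, Finset.mem_univ, true_and] at hw
      rw [hw]; exact hmpos.ne'
    refine ⟨⟨_, hface⟩, ?_⟩
    unfold GOSC.subd
    refine mul_ne_zero (Finset.prod_ne_zero_iff.mpr fun w hw => ?_)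
      (Finset.prod_ne_zero_iff.mpr fun w hw => Finset.prod_ne_zero_iff.mpr fun u _ => ?_)
    · simp only [Finset.mem_filter, Finset.mem_univ, true_and] at hw
      rw [hw]; exact hmpos.ne'
    · simp only [Finset.mem_filter, Finset.mem_univ, true_and] at hw ⊢
      split_ifs with hu
      · exact one_ne_zero
      · have : f u < f m := lt_of_le_of_ne (hm u (Finset.mem_univ u)) hu
        exact (lt_max_of_lt_right (by linarith)).ne'
  refine ⟨fun p => ?_, hne, ?_⟩
  · refine mul_nonneg (Finset.prod_nonneg fun v _ => h0 v)
      (Finset.prod_nonneg fun w _ => Finset.prod_nonneg fun u _ => ?_)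
    split_ifs
    · exact zero_le_one
    · exact le_max_left _ _
  · obtain ⟨p0, hp0⟩ := hne
    obtain ⟨S, hS⟩ : ∃ S : Finset M.sd.V, ∀ p, p ∈ S ↔ GOSC.subd M f p ≠ 0 :=
      ⟨Finset.univ.filter fun p => GOSC.subd M f p ≠ 0, fun p => by simp⟩
    refine ⟨S, ⟨⟨p0, (hS p0).2 hp0⟩, ?_⟩, fun v hv => (hS v).2 hv⟩
    intro p hp q hq
    replace hp := (hS p).1 hp
    replace hq := (hS q).1 hq
    have h1 := (subd_ne M hp).2
    have h2 := (subd_ne M hq).2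
    show p.1 ⊆ q.1 ∨ q.1 ⊆ p.1
    by_contra hcon
    rw [not_or, Finset.not_subset, Finset.not_subset] at hcon
    obtain ⟨⟨a, ha, ha'⟩, b, hb, hb'⟩ := hcon
    exact lt_asymm (h1 a ha b hb') (h2 b hb a ha')

lemma tau_mem {G : Type} [Group G] (M : GOSC G) (s : M.sd.V) : tau M s ∈ s.1 :=
  (Classical.choose_spec (M.exists_greatest s.val s.prop)).1

lemma le_tau {G : Type} [Group G] (M : GOSC G) (s : M.sd.V) (x : M.V) (hx : x ∈ s.1) :
    x ≤ tau M s :=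
  (Classical.choose_spec (M.exists_greatest s.val s.prop)).2 x hx

lemma tau_smul {G : Type} [Group G] (M : GOSC G) (g : G) (s : M.sd.V) :
    tau M (M.sd.smul g s) = M.smul g (tau M s) := by
  apply le_antisymm
  · have h : tau M (M.sd.smul g s) ∈ s.1.image (M.smul g) := tau_mem M (M.sd.smul g s)
    obtain ⟨v, hv, hv'⟩ := Finset.mem_image.mp h
    rw [← hv']
    exact M.smul_mono g _ _ (le_tau M s v hv)
  · apply le_tau
    exact Finset.mem_image_of_mem (M.smul g) (tau_mem M s)

/-- Iterated subdivision weights. -/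
noncomputable def subdIter {G : Type} [Group G] :
    (n : ℕ) → (M : GOSC G) → (M.V → ℝ) → ((sdIter n M).V → ℝ)
  | 0, _, f => f
  | (n + 1), M, f => subd (sdIter n M) (subdIter n M f)

lemma continuous_subdIter {G : Type} [Group G] (n : ℕ) (M : GOSC G) :
    Continuous (subdIter n M) := by
  induction n with
  | zero => exact continuous_id
  | succ n ih => exact (continuous_subd _).comp ih

lemma subdIter_act {G : Type} [Group G] (n : ℕ) (M : GOSC G) (g : G) (f : M.V → ℝ) :
    subdIter n M (act M g f) = act (sdIter n M) g (subdIter n M f) := by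
  induction n with
  | zero => rfl
  | succ n ih =>
    show GOSC.subd _ (subdIter n M (act M g f)) = _
    rw [ih, subd_act]; rfl

lemma Good.subdIter {G : Type} [Group G] (n : ℕ) (M : GOSC G) {f : M.V → ℝ} (hf : Good M f) :
    Good (sdIter n M) (subdIter n M f) := by
  induction n with
  | zero => exact hf
  | succ n ih => exact ih.subd

lemma subdIter_ne {G : Type} [Group G] (n : ℕ) (M : GOSC G) {f : M.V → ℝ}
    (s : (sdIter n M).V) (h : subdIter n M f s ≠ 0) : f (tauIter n M s) ≠ 0 := by
  induction n with
  | zero => exact h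
  | succ n ih => exact ih _ ((subd_ne _ h).1 _ (tau_mem _ s))

open Classical in
/-- Unnormalised push-forward of the part of the weights `F` lying over `A`. -/
noncomputable def pushW {V W : Type} [Fintype V] (A : Set V) (φ : V → W) (F : V → ℝ) : W → ℝ :=
  fun w => ∑ v, if v ∈ A ∧ φ v = w then F v else 0

open Classical in
/-- The mass over `A`. -/
noncomputable def mass {V : Type} [Fintype V] (A : Set V) (F : V → ℝ) : ℝ :=
  ∑ v, if v ∈ A then F v else 0

lemma sum_pushW {V W : Type} [Fintype V] [Fintype W] (A : Set V) (φ : V → W) (F : V → ℝ) :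
    ∑ w, pushW A φ F w = mass A F := by
  classical
  unfold pushW mass
  rw [Finset.sum_comm]
  refine Finset.sum_congr rfl fun v _ => ?_
  by_cases h : v ∈ A <;> simp [h]

lemma pushW_ne {V W : Type} [Fintype V] (A : Set V) (φ : V → W) (F : V → ℝ) (w : W)
    (h : pushW A φ F w ≠ 0) : ∃ v ∈ A, φ v = w ∧ F v ≠ 0 := by
  obtain ⟨v, -, hv⟩ := Finset.exists_ne_zero_of_sum_ne_zero h
  by_cases hc : v ∈ A ∧ φ v = w
  · rw [if_pos hc] at hv; exact ⟨v, hc.1, hc.2, hv⟩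
  · rw [if_neg hc] at hv; exact absurd rfl hv

lemma pushW_nonneg {V W : Type} [Fintype V] (A : Set V) (φ : V → W) (F : V → ℝ)
    (hF : ∀ v, 0 ≤ F v) (w : W) : 0 ≤ pushW A φ F w := by
  refine Finset.sum_nonneg fun v _ => ?_
  split_ifs <;> simp [hF]

lemma continuous_pushW {V W : Type} [Fintype V] (A : Set V) (φ : V → W) :
    Continuous (pushW A φ) := by
  refine continuous_pi fun w => continuous_finsetSum _ fun v _ => ?_
  split_ifs <;> fun_prop

lemma continuous_mass {V : Type} [Fintype V] (A : Set V) : Continuous (mass A) := by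
  refine continuous_finsetSum _ fun v _ => ?_
  split_ifs <;> fun_prop

lemma mass_pos {V : Type} [Fintype V] (A : Set V) (F : V → ℝ) (hF : ∀ v, 0 ≤ F v)
    (h : ∃ v ∈ A, F v ≠ 0) : 0 < mass A F := by
  obtain ⟨v, hv, hne⟩ := h
  refine Finset.sum_pos' (fun v _ => ?_) ⟨v, Finset.mem_univ v, ?_⟩
  · split_ifs <;> simp [hF]
  · rw [if_pos hv]; exact lt_of_le_of_ne (hF v) (Ne.symm hne)

lemma mass_act {G : Type} [Group G] (M : GOSC G) (A : Set M.V)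
    (hA : ∀ g : G, ∀ v ∈ A, M.smul g v ∈ A) (g : G) (F : M.V → ℝ) :
    mass A (act M g F) = mass A F := by
  unfold mass
  rw [← sum_act M g]
  refine Finset.sum_congr rfl fun v _ => ?_
  have : M.smul g v ∈ A ↔ v ∈ A :=
    ⟨fun h => by simpa only [smul_inv_smul'] using hA g⁻¹ _ h, hA g v⟩
  simp only [act, smul_inv_smul']
  classical exact if_congr this rfl rfl

lemma pushW_act {G : Type} [Group G] (M K : GOSC G) (A : Set M.V)
    (hA : ∀ g : G, ∀ v ∈ A, M.smul g v ∈ A) (φ : M.V → K.V)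
    (hφ : ∀ g : G, ∀ v ∈ A, φ (M.smul g v) = K.smul g (φ v)) (g : G) (F : M.V → ℝ) :
    pushW A φ (act M g F) = act K g (pushW A φ F) := by
  funext w
  show pushW A φ (act M g F) w = pushW A φ F (K.smul g⁻¹ w)
  unfold pushW
  rw [← sum_act M g]
  refine Finset.sum_congr rfl fun v _ => ?_
  have h1 : M.smul g v ∈ A ↔ v ∈ A :=
    ⟨fun h => by simpa only [smul_inv_smul'] using hA g⁻¹ _ h, hA g v⟩
  have h2 : (M.smul g v ∈ A ∧ φ (M.smul g v) = w) ↔ (v ∈ A ∧ φ v = K.smul g⁻¹ w) := by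
    rw [h1]
    refine and_congr_right fun hv => ?_
    rw [hφ g v hv]
    constructor
    · rintro rfl; rw [smul_inv_smul']
    · intro h; rw [h, smul_smul_inv']
  simp only [act, smul_inv_smul']
  by_cases h3 : v ∈ A ∧ φ v = K.smul g⁻¹ w
  · rw [if_pos h3, if_pos (h2.2 h3)]
  · rw [if_neg h3, if_neg (fun h => h3 (h2.1 h))]

/-- Equivariant homotopy of maps defined on a subset of `X × X`. -/
def EqHtpy (G : Type) [Group G] {X : Type} [TopologicalSpace X] [MulAction G X]
    (U : Set (X × X)) (p q : C(U, X)) : Prop :=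
  ∃ H : p.Homotopy q, ∀ (g : G) (u : U) (h : g • (u : X × X) ∈ U) (t : unitInterval),
      H (t, ⟨g • (u : X × X), h⟩) = g • H (t, u)

lemma EqHtpy.trans {G : Type} [Group G] {X : Type} [TopologicalSpace X] [MulAction G X]
    {U : Set (X × X)} {p q r : C(U, X)} (h1 : EqHtpy G U p q) (h2 : EqHtpy G U q r) :
    EqHtpy G U p r := by
  obtain ⟨H1, e1⟩ := h1
  obtain ⟨H2, e2⟩ := h2
  refine ⟨H1.trans H2, fun g u h t => ?_⟩
  rw [ContinuousMap.Homotopy.trans_apply, ContinuousMap.Homotopy.trans_apply]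
  dsimp only
  split_ifs
  · exact e1 g u h _
  · exact e2 g u h _

lemma EqHtpy.navigable {G : Type} [Group G] {X : Type} [TopologicalSpace X] [MulAction G X]
    {U : Set (X × X)} {p q : C(U, X)} (hp : ∀ u : U, p u = (u : X × X).1)
    (hq : ∀ u : U, q u = (u : X × X).2) (h : EqHtpy G U p q) : EqNavigable G X U := by
  obtain ⟨H, e⟩ := h
  refine ⟨fun u => (ContinuousMap.comp H.toContinuousMap ContinuousMap.prodSwap).curry u,
    ContinuousMap.continuous _, fun u => ⟨?_, ?_⟩, fun g u h t => e g u h t⟩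
  · exact (H.apply_zero u).trans (hp u)
  · exact (H.apply_one u).trans (hq u)

lemma eqHtpy_linear {G : Type} [Group G] (K : GOSC G) (U : Set (K.Real × K.Real))
    (p q : C(U, K.Real))
    (hp : ∀ (g : G) (u : U) (h : g • (u : K.Real × K.Real) ∈ U),
      p ⟨g • (u : K.Real × K.Real), h⟩ = g • p u)
    (hq : ∀ (g : G) (u : U) (h : g • (u : K.Real × K.Real) ∈ U),
      q ⟨g • (u : K.Real × K.Real), h⟩ = g • q u)
    (hpq : ∀ u, ∃ s ∈ K.faces, ∀ v, ((p u).val v ≠ 0 → v ∈ s) ∧ ((q u).val v ≠ 0 → v ∈ s)) :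
    EqHtpy G U p q := by
  have hmem : ∀ tu : unitInterval × U, (fun v => (1 - (tu.1 : ℝ)) * (p tu.2).val v +
      (tu.1 : ℝ) * (q tu.2).val v) ∈ K.realSet := by
    rintro ⟨t, u⟩
    obtain ⟨s, hs, hsv⟩ := hpq u
    refine ⟨fun v => ?_, ?_, s, hs, fun v hv => ?_⟩
    · have h1 := (p u).prop.1 v
      have h2 := (q u).prop.1 v
      have h3 := t.2.1
      have h4 : (0 : ℝ) ≤ 1 - t := by linarith [t.2.2]
      exact add_nonneg (mul_nonneg h4 h1) (mul_nonneg h3 h2)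
    · have h1 := (p u).prop.2.1
      have h2 := (q u).prop.2.1
      rw [Finset.sum_add_distrib, ← Finset.mul_sum, ← Finset.mul_sum, h1, h2]
      ring
    · by_contra hc
      have h1 : (p u).val v = 0 := by
        by_contra h; exact hc ((hsv v).1 h)
      have h2 : (q u).val v = 0 := by
        by_contra h; exact hc ((hsv v).2 h)
      apply hv
      simp only [h1, h2, mul_zero, add_zero]
  have hpc : Continuous fun u : U => (p u).val := continuous_subtype_val.comp p.continuous
  have hqc : Continuous fun u : U => (q u).val := continuous_subtype_val.comp q.continuous
  refine ⟨⟨⟨fun tu => ⟨_, hmem tu⟩, ?_⟩, ?_, ?_⟩, ?_⟩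
  · refine Continuous.subtype_mk (continuous_pi fun v => ?_) _
    have h1 : Continuous fun tu : unitInterval × U => (p tu.2).val v :=
      (continuous_apply v).comp (hpc.comp continuous_snd)
    have h2 : Continuous fun tu : unitInterval × U => (q tu.2).val v :=
      (continuous_apply v).comp (hqc.comp continuous_snd)
    have h3 : Continuous fun tu : unitInterval × U => (tu.1 : ℝ) :=
      continuous_subtype_val.comp continuous_fst
    exact ((continuous_const.sub h3).mul h1).add (h3.mul h2)
  · intro u
    apply Subtype.ext
    funext v
    simp
  · intro u
    apply Subtype.ext
    funext v
    simp
  · intro g u h t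
    apply Subtype.ext
    funext v
    show (1 - (t : ℝ)) * (p ⟨g • (u : K.Real × K.Real), h⟩).val v +
      (t : ℝ) * (q ⟨g • (u : K.Real × K.Real), h⟩).val v = _
    rw [hp, hq]
    rfl

/-- The unnormalised weights on `sd^(b+1) (K × K)` of a pair of points. -/
noncomputable def bigH {G : Type} [Group G] (K : GOSC G) (b : ℕ) (z : K.Real × K.Real) :
    (sdIter b (K.prod K)).sd.V → ℝ :=
  subd _ (subdIter b (K.prod K) (stair K z.1.val z.2.val))

lemma Real.good {G : Type} [Group G] (K : GOSC G) (x : K.Real) : Good K x.val := by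
  refine ⟨x.prop.1, ?_, x.prop.2.2⟩
  by_contra hc
  push Not at hc
  have := x.prop.2.1
  rw [Finset.sum_eq_zero fun v _ => hc v] at this
  exact zero_ne_one this

lemma bigH_good {G : Type} [Group G] (K : GOSC G) (b : ℕ) (z : K.Real × K.Real) :
    Good _ (bigH K b z) :=
  ((Good.stair K (Real.good K z.1) (Real.good K z.2)).subdIter b).subd

lemma continuous_bigH {G : Type} [Group G] (K : GOSC G) (b : ℕ) : Continuous (bigH K b) := by
  refine (continuous_subd _).comp ((continuous_subdIter b _).comp ?_)
  have h1 : Continuous fun z : K.Real × K.Real => z.1.val :=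
    continuous_subtype_val.comp continuous_fst
  have h2 : Continuous fun z : K.Real × K.Real => z.2.val :=
    continuous_subtype_val.comp continuous_snd
  exact (continuous_stair K).comp (h1.prodMk h2)

lemma bigH_smul {G : Type} [Group G] (K : GOSC G) (b : ℕ) (g : G) (z : K.Real × K.Real) :
    bigH K b (g • z) = act _ g (bigH K b z) := by
  show subd _ (subdIter b (K.prod K) (stair K (act K g z.1.val) (act K g z.2.val))) = _
  rw [stair_act, subdIter_act, subd_act]
  rfl

lemma bigH_ne {G : Type} [Group G] (K : GOSC G) (b : ℕ) (z : K.Real × K.Real)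
    (s : (sdIter b (K.prod K)).sd.V) (h : bigH K b z s ≠ 0) :
    z.1.val (tauIter b (K.prod K) (tau _ s)).1 ≠ 0 ∧
    z.2.val (tauIter b (K.prod K) (tau _ s)).2 ≠ 0 := by
  have := stair_ne K (subdIter_ne b _ _ ((subd_ne _ h).1 _ (tau_mem _ s)))
  exact ⟨this.1, this.2.1⟩

lemma navigable_of_contig {G : Type} [Group G] (K : GOSC G) (b c : ℕ)
    (Λ : Set (Finset (sdIter b (K.prod K)).V))
    (hinv : ∀ g : G, ∀ s ∈ Λ, s.image ((sdIter b (K.prod K)).smul g) ∈ Λ)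
    (hc : ContigOn (sdIter b (K.prod K)) K
        (fun v => (tauIter b (K.prod K) v).1)
        (fun v => (tauIter b (K.prod K) v).2) Λ c) :
    EqNavigable G K.Real {z | ∃ s, s.1 ∈ Λ ∧ bigH K b z s ≠ 0} := by
  classical
  obtain ⟨φ, hφ0, hφ1, hφf, hφe, hφc⟩ := hc
  let U : Set (K.Real × K.Real) := {z | ∃ s, s.1 ∈ Λ ∧ bigH K b z s ≠ 0}
  let A : Set (sdIter b (K.prod K)).sd.V := {s | s.1 ∈ Λ}
  have hA : ∀ g : G, ∀ v ∈ A, (sdIter b (K.prod K)).sd.smul g v ∈ A := fun g v hv => hinv g v.1 hv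
  let ψ : Fin (c + 1) → (sdIter b (K.prod K)).sd.V → K.V := fun j s => φ j (tau (sdIter b (K.prod K)) s)
  have hψ : ∀ j, ∀ g : G, ∀ v ∈ A, ψ j ((sdIter b (K.prod K)).sd.smul g v) = K.smul g (ψ j v) := by
    intro j g v hv
    show φ j (tau (sdIter b (K.prod K)) ((sdIter b (K.prod K)).sd.smul g v)) = _
    rw [tau_smul]
    exact hφe j g v.1 hv _ (tau_mem (sdIter b (K.prod K)) v)
  have hpos : ∀ u : U, 0 < mass A (bigH K b u) := fun u =>
    mass_pos A _ (bigH_good K b u).1 u.2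
  -- the top simplex of the part of the support lying in `Λ`
  have htop : ∀ u : U, ∃ t ∈ Λ, ∀ s ∈ A, bigH K b u s ≠ 0 → s.1 ⊆ t := by
    intro u
    obtain ⟨-, -, σ, hσ, hsupp⟩ := bigH_good K b u
    obtain ⟨s0, hs0, hs0'⟩ := u.2
    have hne : (σ.filter fun s => s ∈ A ∧ bigH K b u s ≠ 0).Nonempty :=
      ⟨s0, Finset.mem_filter.mpr ⟨hsupp s0 hs0', hs0, hs0'⟩⟩
    obtain ⟨m, hm, hmax⟩ := (sdIter b (K.prod K)).sd.exists_greatest _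
      ((sdIter b (K.prod K)).sd.down_closed σ hσ _ (Finset.filter_subset _ _) hne)
    refine ⟨m.1, (Finset.mem_filter.mp hm).2.1, fun s hs hs' => ?_⟩
    exact hmax s (Finset.mem_filter.mpr ⟨hsupp s hs', hs, hs'⟩)
  have hqne : ∀ j (u : U) (w : K.V), (mass A (bigH K b u))⁻¹ * pushW A (ψ j) (bigH K b u) w ≠ 0 →
      ∃ s ∈ A, ψ j s = w ∧ bigH K b u s ≠ 0 := fun j u w h =>
    pushW_ne A _ _ w (right_ne_zero_of_mul h)
  have hmem : ∀ j (u : U), (fun w => (mass A (bigH K b u))⁻¹ * pushW A (ψ j) (bigH K b u) w) ∈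
      K.realSet := by
    intro j u
    refine ⟨fun w => mul_nonneg (inv_nonneg.mpr (hpos u).le)
      (pushW_nonneg A _ _ (bigH_good K b u).1 w), ?_, ?_⟩
    · rw [← Finset.mul_sum, sum_pushW, inv_mul_cancel₀ (hpos u).ne']
    · obtain ⟨t, ht, htt⟩ := htop u
      refine ⟨_, hφf j t ht, fun w hw => ?_⟩
      obtain ⟨s, hs, rfl, hs'⟩ := hqne j u w hw
      exact Finset.mem_image_of_mem _ (htt s hs hs' (tau_mem (sdIter b (K.prod K)) s))
  have hHc : Continuous fun u : U => bigH K b u :=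
    (continuous_bigH K b).comp continuous_subtype_val
  let q : Fin (c + 1) → C(U, K.Real) := fun j => ⟨fun u => ⟨_, hmem j u⟩, by
    refine Continuous.subtype_mk (continuous_pi fun w => ?_) _
    refine Continuous.mul (Continuous.inv₀ ((continuous_mass A).comp hHc)
      fun u => (hpos u).ne') ?_
    exact (continuous_apply w).comp ((continuous_pushW A (ψ j)).comp hHc)⟩
  have hqe : ∀ j (g : G) (u : U) (h : g • (u : K.Real × K.Real) ∈ U),
      q j ⟨g • (u : K.Real × K.Real), h⟩ = g • q j u := by
    intro j g u h
    apply Subtype.ext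
    funext w
    show (mass A (bigH K b (g • (u : K.Real × K.Real))))⁻¹ *
      pushW A (ψ j) (bigH K b (g • (u : K.Real × K.Real))) w = _
    rw [bigH_smul, mass_act (sdIter b (K.prod K)).sd A hA, pushW_act (sdIter b (K.prod K)).sd K A hA (ψ j) (hψ j)]
    rfl
  let p1 : C(U, K.Real) := ⟨fun u => (u : K.Real × K.Real).1,
    continuous_fst.comp continuous_subtype_val⟩
  let p2 : C(U, K.Real) := ⟨fun u => (u : K.Real × K.Real).2,
    continuous_snd.comp continuous_subtype_val⟩
  have hstart : EqHtpy G U p1 (q 0) := by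
    refine eqHtpy_linear K U _ _ (fun _ _ _ => rfl) (hqe 0) fun u => ?_
    obtain ⟨s, hs, hs'⟩ := (u : K.Real × K.Real).1.prop.2.2
    refine ⟨s, hs, fun v => ⟨hs' v, fun hv => hs' v ?_⟩⟩
    obtain ⟨r, hr, rfl, hr'⟩ := hqne 0 u v hv
    show (u : K.Real × K.Real).1.val (φ 0 (tau (sdIter b (K.prod K)) r)) ≠ 0
    rw [hφ0 r.1 hr _ (tau_mem (sdIter b (K.prod K)) r)]
    exact (bigH_ne K b u r hr').1
  have hend : EqHtpy G U (q (Fin.last c)) p2 := by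
    refine eqHtpy_linear K U _ _ (hqe _) (fun _ _ _ => rfl) fun u => ?_
    obtain ⟨s, hs, hs'⟩ := (u : K.Real × K.Real).2.prop.2.2
    refine ⟨s, hs, fun v => ⟨fun hv => hs' v ?_, hs' v⟩⟩
    obtain ⟨r, hr, rfl, hr'⟩ := hqne _ u v hv
    show (u : K.Real × K.Real).2.val (φ (Fin.last c) (tau (sdIter b (K.prod K)) r)) ≠ 0
    rw [hφ1 r.1 hr _ (tau_mem (sdIter b (K.prod K)) r)]
    exact (bigH_ne K b u r hr').2
  have hstep : ∀ j : Fin c, EqHtpy G U (q j.castSucc) (q j.succ) := by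
    intro j
    refine eqHtpy_linear K U _ _ (hqe _) (hqe _) fun u => ?_
    obtain ⟨t, ht, htt⟩ := htop u
    refine ⟨_, hφc j t ht, fun v => ⟨fun hv => ?_, fun hv => ?_⟩⟩
    · obtain ⟨s, hs, rfl, hs'⟩ := hqne _ u v hv
      exact Finset.mem_union_left _ (Finset.mem_image_of_mem _ (htt s hs hs' (tau_mem (sdIter b (K.prod K)) s)))
    · obtain ⟨s, hs, rfl, hs'⟩ := hqne _ u v hv
      exact Finset.mem_union_right _ (Finset.mem_image_of_mem _ (htt s hs hs' (tau_mem (sdIter b (K.prod K)) s)))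
  have hall : ∀ j : Fin (c + 1), EqHtpy G U p1 (q j) := by
    intro j
    induction j using Fin.induction with
    | zero => exact hstart
    | succ j ih => exact ih.trans (hstep j)
  exact ((hall (Fin.last c)).trans hend).navigable (fun _ => rfl) (fun _ => rfl)

end Proof

end GOSC

/-- Let `G` be a finite group and `K` an ordered `G`-simplicial complex.
Then `TC_G(|K|) ≤ SC_G(K)`: the equivariant topological complexity of the geometric
realization of `K` is at most the equivariant simplicial complexity of `K`. -/
theorem eqTC_real_le_SCG (G : Type) [Group G] [Finite G] (K : GOSC G) :
    eqTC G K.Real ≤ K.SCG := by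
  unfold GOSC.SCG
  refine le_iInf fun b => le_iInf fun c => le_sInf ?_
  rintro k ⟨n, rfl, Λ, hsub, hdown, hinv, hcov, hcont⟩
  refine sInf_le ⟨n, rfl, fun i => {z | ∃ s, s.1 ∈ Λ i ∧ GOSC.bigH K b z s ≠ 0}, ?_, ?_, ?_, ?_⟩
  · intro i
    have : {z | ∃ s, s.1 ∈ Λ i ∧ GOSC.bigH K b z s ≠ 0} =
        ⋃ s, ⋃ (_ : s.1 ∈ Λ i), {z | GOSC.bigH K b z s ≠ 0} := by
      ext z; simp
    refine (congrArg IsOpen this).mpr ?_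
    refine isOpen_iUnion fun s => isOpen_iUnion fun _ => ?_
    exact isOpen_ne.preimage ((continuous_apply s).comp (GOSC.continuous_bigH K b))
  · rintro i g z ⟨s, hs, hs'⟩
    refine ⟨(GOSC.sdIter b (K.prod K)).sd.smul g s, hinv i g s.1 hs, ?_⟩
    rw [GOSC.bigH_smul]
    unfold GOSC.act
    rw [GOSC.smul_inv_smul']
    exact hs'
  · refine Set.eq_univ_of_forall fun z => ?_
    obtain ⟨s, hs⟩ := (GOSC.bigH_good K b z).2.1
    obtain ⟨i, hi⟩ := Set.mem_iUnion.mp (hcov s.2)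
    exact Set.mem_iUnion.mpr ⟨i, s, hi, hs⟩
  · exact fun i => GOSC.navigable_of_contig K b c (Λ i) (hinv i) (hcont i)
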